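/- Let 𝒜 be a family of sets such that ⋃𝒜 is countable, and let ℬ be a family of sets closed under supersets (if B ∈ ℬ and B ⊆ C then C ∈ ℬ). Then Player II has a winning strategy in the selection game G_fin(𝒜,ℬ) if and only if Player II has a winning Markov strategy in G_fin(𝒜,ℬ). -/

import Mathlib

open TopologicalSpace Cardinal

/-- Player II has a winning (perfect-information) strategy in the selection game
`G_fin(𝒜, ℬ)`: during round `n`, Player I plays `A n ∈ 𝒜` and II responds with a
finite subset of `A n` depending on `⟨A 0, …, A n⟩`; II wins iff the union of
its selections lies in `ℬ`. -/
def WinStratFin {X : Type*} (𝒜 ℬ : Set (Set X)) : Prop :=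
  ∃ σ : (n : ℕ) → (Fin (n + 1) → Set X) → Set X,
    (∀ (n : ℕ) (s : Fin (n + 1) → Set X), (∀ i, s i ∈ 𝒜) →
      (σ n s).Finite ∧ σ n s ⊆ s (Fin.last n)) ∧
    ∀ A : ℕ → Set X, (∀ n, A n ∈ 𝒜) →
      (⋃ n : ℕ, σ n (fun i => A i)) ∈ ℬ

/-- Player II has a winning Markov strategy in `G_fin(𝒜, ℬ)`: its finite selection
from `A n` depends only on `A n` and the round number `n`. -/
def WinMarkovFin {X : Type*} (𝒜 ℬ : Set (Set X)) : Prop :=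
  ∃ σ : Set X → ℕ → Set X,
    (∀ A ∈ 𝒜, ∀ n : ℕ, (σ A n).Finite ∧ σ A n ⊆ A) ∧
    ∀ A : ℕ → Set X, (∀ n, A n ∈ 𝒜) → (⋃ n : ℕ, σ (A n) n) ∈ ℬ

/-- Player II has a winning (perfect-information) strategy in the strong selection
game `G_1(𝒜, ℬ)`: during round `n`, Player I plays `A n ∈ 𝒜` and II responds with a
single element of `A n` depending on `⟨A 0, …, A n⟩`; II wins iff the set of
its selections lies in `ℬ`. -/
def WinStratOne {X : Type*} (𝒜 ℬ : Set (Set X)) : Prop :=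
  ∃ σ : (n : ℕ) → (Fin (n + 1) → Set X) → X,
    (∀ (n : ℕ) (s : Fin (n + 1) → Set X), (∀ i, s i ∈ 𝒜) →
      σ n s ∈ s (Fin.last n)) ∧
    ∀ A : ℕ → Set X, (∀ n, A n ∈ 𝒜) →
      {x | ∃ n : ℕ, x = σ n (fun i => A i)} ∈ ℬ

/-- Player II has a winning Markov strategy in `G_1(𝒜, ℬ)`. -/
def WinMarkovOne {X : Type*} (𝒜 ℬ : Set (Set X)) : Prop :=
  ∃ σ : Set X → ℕ → X,
    (∀ A ∈ 𝒜, ∀ n : ℕ, σ A n ∈ A) ∧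
    ∀ A : ℕ → Set X, (∀ n, A n ∈ 𝒜) → {x | ∃ n : ℕ, x = σ (A n) n} ∈ ℬ

/-- `𝒟_X`: the collection of dense subsets of `X`. -/
def denseFamily (X : Type*) [TopologicalSpace X] : Set (Set X) := {D | Dense D}

/-- `ℬ_{X,x}`: the collection of subsets of `X` having `x` in their closure. -/
def blades (X : Type*) [TopologicalSpace X] (x : X) : Set (Set X) :=
  {A | x ∈ closure A}

/-- An ω-cover of `X`: an open cover such that every finite subset of `X` is
contained in some member. -/
def IsOmegaCover {X : Type*} [TopologicalSpace X] (𝒰 : Set (Set X)) : Prop :=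
  (∀ U ∈ 𝒰, IsOpen U) ∧ (⋃₀ 𝒰 = Set.univ) ∧
    ∀ F : Set X, F.Finite → ∃ U ∈ 𝒰, F ⊆ U

/-- `Ω_X`: the collection of ω-covers of `X`. -/
def omegaCovers (X : Type*) [TopologicalSpace X] : Set (Set (Set X)) :=
  {𝒰 | IsOmegaCover 𝒰}

/-- `𝒪_X`: the collection of open covers of `X`. -/
def openCovers (X : Type*) [TopologicalSpace X] : Set (Set (Set X)) :=
  {𝒰 | (∀ U ∈ 𝒰, IsOpen U) ∧ ⋃₀ 𝒰 = Set.univ}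

/-- `C_p(X)`: continuous real-valued functions on `X` with the topology of
pointwise convergence (subspace of the product `ℝ^X`). -/
abbrev Cp (X : Type*) [TopologicalSpace X] : Type _ := {f : X → ℝ // Continuous f}

/-- Countable fan tightness of `Y` at `y`. -/
def CFTat (Y : Type*) [TopologicalSpace Y] (y : Y) : Prop :=
  ∀ A : ℕ → Set Y, (∀ n, y ∈ closure (A n)) →
    ∃ B : ℕ → Set Y, (∀ n, (B n).Finite ∧ B n ⊆ A n) ∧ y ∈ closure (⋃ n, B n)

/-- Countable dense fan tightness of `Y` at `y`. -/
def CDFTat (Y : Type*) [TopologicalSpace Y] (y : Y) : Prop :=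
  ∀ A : ℕ → Set Y, (∀ n, Dense (A n)) →
    ∃ B : ℕ → Set Y, (∀ n, (B n).Finite ∧ B n ⊆ A n) ∧ y ∈ closure (⋃ n, B n)

/-- Selective separability of `X`. -/
def SelSep (X : Type*) [TopologicalSpace X] : Prop :=
  ∀ D : ℕ → Set X, (∀ n, Dense (D n)) →
    ∃ E : ℕ → Set X, (∀ n, (E n).Finite ∧ E n ⊆ D n) ∧ Dense (⋃ n, E n)

/-- The Ω-Menger selection principle `S_fin(Ω_X, Ω_X)`. -/
def OmegaMenger (X : Type*) [TopologicalSpace X] : Prop :=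
  ∀ 𝒰 : ℕ → Set (Set X), (∀ n, 𝒰 n ∈ omegaCovers X) →
    ∃ ℱ : ℕ → Set (Set X), (∀ n, (ℱ n).Finite ∧ ℱ n ⊆ 𝒰 n) ∧
      (⋃ n, ℱ n) ∈ omegaCovers X

/-- The one-point Lindelöfication topology on `Option α`: sets not containing
`none` (the point `∞`) are open, and a set containing `∞` is open iff its
complement is countable. -/
def lindTop (α : Type*) : TopologicalSpace (Option α) where
  IsOpen S := none ∈ S → Sᶜ.Countable
  isOpen_univ := by simp
  isOpen_inter := by
    intro s t hs ht hmem
    rw [Set.compl_inter]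
    exact (hs hmem.1).union (ht hmem.2)
  isOpen_sUnion := by
    intro S hS hmem
    obtain ⟨s, hsS, hns⟩ := hmem
    exact ((hS s hsS hns).mono
      (Set.compl_subset_compl.mpr (Set.subset_sUnion_of_mem hsS)))


/-- history attached to a node -/
noncomputable def nodeHist {α : Type*} (A0 : Set α) (pick : ℕ → (ℕ → Set α) → ℕ → Set α) :
    List ℕ → ℕ → Set α
  | [] => fun _ => A0
  | m :: L => Function.update (nodeHist A0 pick L) L.length
      (pick L.length (nodeHist A0 pick L) m)

/-- if `⋃𝒜` is countable and `ℬ` is closed under supersets, then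
II wins `G_fin(𝒜, ℬ)` iff II wins it with a Markov strategy. -/
theorem statement12 {α : Type*} (𝒜 ℬ : Set (Set α))
    (h𝒜 : (⋃₀ 𝒜).Countable)
    (hℬ : ∀ B ∈ ℬ, ∀ C : Set α, B ⊆ C → C ∈ ℬ) :
    WinStratFin 𝒜 ℬ ↔ WinMarkovFin 𝒜 ℬ := by
  constructor
  swap
  · rintro ⟨τ, h1, h2⟩
    refine ⟨fun n s => τ (s (Fin.last n)) n, fun n s hs => h1 _ (hs _) n, fun A hA => ?_⟩
    simpa using h2 A hA
  rintro ⟨σ, h1, h2⟩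
  rcases 𝒜.eq_empty_or_nonempty with h0 | ⟨A0, hA0⟩
  · subst h0
    exact ⟨fun _ _ => ∅, fun A hA => hA.elim, fun A hA => (hA 0).elim⟩
  obtain ⟨e, he⟩ := Set.countable_iff_exists_injOn.1 (Set.countable_setOf_finite_subset h𝒜)
  -- response at stage n with history h and next move A
  let R : ℕ → (ℕ → Set α) → Set α → Set α :=
    fun n h A => σ n (fun i => Function.update h n A i)
  have hupd : ∀ n (h : ℕ → Set α) A, (∀ i, h i ∈ 𝒜) → A ∈ 𝒜 →
      ∀ i, Function.update h n A i ∈ 𝒜 := by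
    intro n h A hh hA i
    by_cases hi : i = n
    · subst hi; simpa using hA
    · simpa [hi] using hh i
  have hR : ∀ n (h : ℕ → Set α) A, (∀ i, h i ∈ 𝒜) → A ∈ 𝒜 →
      (R n h A).Finite ∧ R n h A ⊆ A := by
    intro n h A hh hA
    have := h1 n (fun i => Function.update h n A i) (fun i => hupd n h A hh hA i)
    simpa [R] using this
  have hpick : ∀ n (h : ℕ → Set α) (m : ℕ), ∃ P ∈ 𝒜,
      ∀ A ∈ 𝒜, e (R n h A) = m → e (R n h P) = m := by
    intro n h m
    by_cases hx : ∃ P ∈ 𝒜, e (R n h P) = m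
    · obtain ⟨P, hP, hm⟩ := hx
      exact ⟨P, hP, fun _ _ _ => hm⟩
    · exact ⟨A0, hA0, fun A hA hm => (hx ⟨A, hA, hm⟩).elim⟩
  choose pick hp1 hp2 using hpick
  let H := nodeHist A0 pick
  have hH : ∀ L i, H L i ∈ 𝒜 := by
    intro L
    induction L with
    | nil => intro i; exact hA0
    | cons m L ih => exact hupd _ _ _ ih (hp1 _ _ _)
  have hpR : ∀ L : List ℕ, ∀ A ∈ 𝒜, R L.length (H L) (pick L.length (H L) (e (R L.length (H L) A)))
      = R L.length (H L) A := by
    intro L A hA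
    have hf : ∀ B ∈ 𝒜, R L.length (H L) B ∈ {t | t.Finite ∧ t ⊆ ⋃₀ 𝒜} := fun B hB =>
      ⟨(hR _ _ B (hH L) hB).1, (hR _ _ B (hH L) hB).2.trans (Set.subset_sUnion_of_mem hB)⟩
    exact he (hf _ (hp1 _ _ _)) (hf _ hA) (hp2 _ _ _ A hA rfl)
  let D : ℕ → List ℕ := fun k => (Encodable.decode k).getD []
  have hD : ∀ L, D (Encodable.encode L) = L := fun L => by simp [D]
  refine ⟨fun A k => R (D k).length (H (D k)) A, fun A hA k => hR _ _ A (hH _) hA, ?_⟩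
  intro A hA
  let c : List ℕ → Set α := fun L => A (Encodable.encode L)
  let N : ℕ → List ℕ := fun n => Nat.rec [] (fun _ L => e (R L.length (H L) (c L)) :: L) n
  have hN : ∀ n, N (n+1) = e (R (N n).length (H (N n)) (c (N n))) :: N n := fun n => rfl
  have hlen : ∀ n, (N n).length = n := by
    intro n
    induction n with
    | zero => rfl
    | succ n ih => rw [hN, List.length_cons, ih]
  have hHN : ∀ n, H (N (n+1)) = Function.update (H (N n)) (N n).length
      (pick (N n).length (H (N n)) (e (R (N n).length (H (N n)) (c (N n))))) := fun n => rfl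
  let B : ℕ → Set α := fun n => H (N (n+1)) n
  have hB : ∀ n i, i < n → H (N n) i = B i := by
    intro n
    induction n with
    | zero => intro i hi; omega
    | succ n ih =>
      intro i hi
      by_cases h : i = n
      · subst h; rfl
      · rw [hHN, hlen, Function.update_of_ne h]
        exact ih i (by omega)
  have key : ∀ n, σ n (fun i => B i) = R (N n).length (H (N n)) (c (N n)) := by
    intro n
    rw [← hpR (N n) (c (N n)) (hA _)]
    have : (fun i : Fin (n+1) => B i) = fun i : Fin (n+1) => H (N (n+1)) i := by
      funext i
      exact (hB (n+1) i i.2).symm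
    rw [this, hHN, hlen]
  refine hℬ _ (h2 B (fun n => hH _ _)) _ ?_
  refine Set.iUnion_subset fun n => ?_
  rw [key]
  refine Set.subset_iUnion_of_subset (Encodable.encode (N n)) ?_
  simp only [hD]
  exact subset_rfl
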